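/- arXiv:math/0408073 — 5 statements merged into one kernel-verified Lean document; each statement's English description precedes it below -/
import Mathlib

section
/- Let α, β : ℤ → ℂ and F, G, H : ℤ → ℂ[z] satisfy the stationary zero-curvature relations (R1)–(R4). Then the polynomial G(n)² − F(n)·H(n) ∈ ℂ[z] is a lattice constant, i.e., G(n)² − F(n)·H(n) = G(n₀)² − F(n₀)·H(n₀) for all n, n₀ ∈ ℤ. -/
/-!
Multiply the difference `G(n) - G(n-1)`, given by (R4), by `G(n) + G(n-1)`. Then (R1) and (R2)
eliminate `α(n)` and `β(n)`, the two terms `z F(n-1) H(n)` cancel, and what remains is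
`F(n) H(n) - F(n-1) H(n-1)`.
-/

open Polynomial

theorem sq_sub_mul_eq_of_zero_curvature {R : Type*} [CommRing R] {z a c f f' g g' h h' : R}
    (hf : f - z * f' = a * (g + g')) (hh : z * h - h' = c * (g + g'))
    (hg : g - g' = a * h + c * f') :
    g ^ 2 - f * h = g' ^ 2 - f' * h' := by
  have key : g ^ 2 - g' ^ 2 = f * h - f' * h' :=
    calc
      g ^ 2 - g' ^ 2 = (g + g') * (g - g') := sq_sub_sq g g'
      _ = a * (g + g') * h + c * (g + g') * f' := by rw [hg]; ring
      _ = (f - z * f') * h + (z * h - h') * f' := by rw [hf, hh]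
      _ = f * h - f' * h' := by ring
  exact sub_eq_sub_iff_sub_eq_sub.mpr key

theorem eq_of_periodic_one {A : Type*} {f : ℤ → A} (hf : Function.Periodic f 1) (m n : ℤ) :
    f m = f n := by
  have eq_zero (k : ℤ) : f k = f 0 := by simpa only [Int.cast_id, mul_one] using hf.int_mul_eq k
  rw [eq_zero m, eq_zero n]

theorem zero_curvature_lattice_constant_general {R : Type*} [CommRing R] (z : R)
    (α β F G H : ℤ → R)
    (hR1 : ∀ n : ℤ, F n - z * F (n - 1) - α n * (G n + G (n - 1)) = 0)
    (hR2 : ∀ n : ℤ, z * β n * (G n + G (n - 1)) + H (n - 1) - z * H n = 0)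
    (hR4 : ∀ n : ℤ, G n - G (n - 1) - α n * H n - z * β n * F (n - 1) = 0) (n n₀ : ℤ) :
    G n ^ 2 - F n * H n = G n₀ ^ 2 - F n₀ * H n₀ := by
  have step (k : ℤ) : G k ^ 2 - F k * H k = G (k - 1) ^ 2 - F (k - 1) * H (k - 1) :=
    sq_sub_mul_eq_of_zero_curvature (z := z) (a := α k) (c := z * β k)
      (by linear_combination hR1 k) (by linear_combination -hR2 k) (by linear_combination hR4 k)
  have periodic : Function.Periodic (fun k ↦ G k ^ 2 - F k * H k) 1 := fun k ↦ by
    simpa only [add_sub_cancel_right] using step (k + 1)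
  exact eq_of_periodic_one periodic n n₀

/-- Under the stationary zero-curvature relations (R1)–(R4), the polynomial
`G(n)² − F(n)·H(n)` is a lattice constant. -/
theorem zero_curvature_lattice_constant
    (α β : ℤ → ℂ) (F G H : ℤ → Polynomial ℂ)
    (hR1 : ∀ n : ℤ, F n - X * F (n - 1) - C (α n) * (G n + G (n - 1)) = 0)
    (hR2 : ∀ n : ℤ, X * C (β n) * (G n + G (n - 1)) + H (n - 1) - X * H n = 0)
    (hR3 : ∀ n : ℤ, X * (G (n - 1) - G n) + C (α n) * H (n - 1) + X * C (β n) * F n = 0)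
    (hR4 : ∀ n : ℤ, G n - G (n - 1) - C (α n) * H n - X * C (β n) * F (n - 1) = 0) :
    ∀ n n₀ : ℤ, (G n) ^ 2 - F n * H n = (G n₀) ^ 2 - F n₀ * H n₀ :=
  zero_curvature_lattice_constant_general X (fun n ↦ C (α n)) (fun n ↦ C (β n)) F G H hR1 hR2 hR4
end

section
/- Suppose the polynomials F_p(·,n), G_{p+1}(·,n), H_{p+1}(·,n) built from the coefficient sequences f_ℓ, g_ℓ, h_ℓ (with g₀(n) = 1 for all n) satisfy the stationary zero-curvature relations (R1)–(R4) for all n ∈ ℤ. Then: (a) f₀(n) = −2α(n+1) and h₀(n) = 2β(n) for all n; (b) for every ℓ = 0, …, p−1 and all n: g_{ℓ+1}(n) − g_{ℓ+1}(n−1) = α(n)·h_ℓ(n−1) + β(n)·f_ℓ(n), f_{ℓ+1}(n−1) = f_ℓ(n) − α(n)·(g_{ℓ+1}(n) + g_{ℓ+1}(n−1)), and h_{ℓ+1}(n) = h_ℓ(n−1) + β(n)·(g_{ℓ+1}(n) + g_{ℓ+1}(n−1)); (c) for all n: f_p(n) = α(n)·(g_{p+1}(n) + g_{p+1}(n−1)),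 β(n)·(g_{p+1}(n) + g_{p+1}(n−1)) + h_p(n−1) − h_{p+1}(n) = 0, h_{p+1}(n) = 0, g_{p+1}(n−1) − g_{p+1}(n) + α(n)·h_p(n−1) + β(n)·f_p(n) = 0, and α(n)·h_{p+1}(n) + g_{p+1}(n−1) − g_{p+1}(n) = 0; in particular g_{p+1}(n) is independent of n. -/
open Polynomial

/-!
Comparing powers of `z` in (R1)–(R3) gives a recursion for the coefficients of `F`, `G`, `H`: the
highest powers give `f₀` and `h₀`, the constant terms the relations at the last level. Moreover
`z · (R4) = α · (R2) + z β · (R1) - (R3)`, from which (R4) follows by cancelling `z`; its constant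
term, where `h_{p+1} = 0` by (R2), says that `g_{p+1}` is invariant under the unit shift.
-/

section DescendingPoly

variable {R : Type*} [Semiring R]

/-- The polynomial `a₀ zᵐ + a₁ zᵐ⁻¹ + ⋯ + aₘ`, the form in which `F_p`, `G_{p+1}` and `H_{p+1}` are
built from their coefficient sequences; note that `a ℓ` is the coefficient of `z ^ (m - ℓ)`. -/
noncomputable def descendingPoly (a : ℕ → R) (m : ℕ) : R[X] :=
  ∑ ℓ ∈ Finset.range (m + 1), C (a (m - ℓ)) * X ^ ℓ

lemma coeff_descendingPoly (a : ℕ → R) {m k ℓ : ℕ} (hm : k + ℓ = m) :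
    (descendingPoly a m).coeff k = a ℓ := by
  simp [descendingPoly, finsetSum_coeff, coeff_X_pow, ← hm]

lemma coeff_descendingPoly_of_lt (a : ℕ → R) {m k : ℕ} (hm : m < k) :
    (descendingPoly a m).coeff k = 0 := by
  have hk : ¬k < m + 1 := by lia
  simp [descendingPoly, finsetSum_coeff, coeff_X_pow, hk]

end DescendingPoly

/-- The stationary zero-curvature relations (R1)–(R3) for arbitrary polynomials `F n`, `G n`, `H n`
on the lattice. Relation (R4) is derived from them in `StationaryZeroCurvature.r4`. -/
structure StationaryZeroCurvature {R : Type*} [CommRing R] (α β : ℤ → R) (F G H : ℤ → R[X]) :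
    Prop where
  r1 (n : ℤ) : F n - X * F (n - 1) - C (α n) * (G n + G (n - 1)) = 0
  r2 (n : ℤ) : X * C (β n) * (G n + G (n - 1)) + H (n - 1) - X * H n = 0
  r3 (n : ℤ) : X * (G (n - 1) - G n) + C (α n) * H (n - 1) + X * C (β n) * F n = 0

namespace StationaryZeroCurvature

variable {R : Type*} [CommRing R] {α β : ℤ → R} {F G H : ℤ → R[X]}

lemma r4 (hZC : StationaryZeroCurvature α β F G H) (n : ℤ) :
    G n - G (n - 1) - C (α n) * H n - X * C (β n) * F (n - 1) = 0 := by
  have X_mul_r4 : X * (G n - G (n - 1) - C (α n) * H n - X * C (β n) * F (n - 1)) = X * 0 := by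
    linear_combination C (α n) * hZC.r2 n + X * C (β n) * hZC.r1 n - hZC.r3 n
  exact isRegular_X.left X_mul_r4

lemma coeff_zero_F (hZC : StationaryZeroCurvature α β F G H) (n : ℤ) :
    (F n).coeff 0 = α n * ((G n).coeff 0 + (G (n - 1)).coeff 0) := by
  have hcoeff := congrArg (coeff · 0) (hZC.r1 n)
  simpa [sub_eq_zero] using hcoeff

lemma coeff_succ_F (hZC : StationaryZeroCurvature α β F G H) (n : ℤ) (k : ℕ) :
    (F n).coeff (k + 1) =
      (F (n - 1)).coeff k + α n * ((G n).coeff (k + 1) + (G (n - 1)).coeff (k + 1)) := by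
  have hcoeff := congrArg (coeff · (k + 1)) (hZC.r1 n)
  simp only [coeff_sub, coeff_add, coeff_X_mul, coeff_C_mul, coeff_zero] at hcoeff
  linear_combination hcoeff

lemma coeff_zero_H (hZC : StationaryZeroCurvature α β F G H) (n : ℤ) : (H n).coeff 0 = 0 := by
  have hcoeff := congrArg (coeff · 0) (hZC.r2 (n + 1))
  simpa [mul_assoc] using hcoeff

lemma coeff_H (hZC : StationaryZeroCurvature α β F G H) (n : ℤ) (k : ℕ) :
    (H n).coeff k =
      (H (n - 1)).coeff (k + 1) + β n * ((G n).coeff k + (G (n - 1)).coeff k) := by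
  have hcoeff := congrArg (coeff · (k + 1)) (hZC.r2 n)
  simp only [mul_assoc, coeff_sub, coeff_add, coeff_X_mul, coeff_C_mul, coeff_zero] at hcoeff
  linear_combination -hcoeff

lemma coeff_G_sub (hZC : StationaryZeroCurvature α β F G H) (n : ℤ) (k : ℕ) :
    (G n).coeff k - (G (n - 1)).coeff k =
      α n * (H (n - 1)).coeff (k + 1) + β n * (F n).coeff k := by
  have hcoeff := congrArg (coeff · (k + 1)) (hZC.r3 n)
  simp only [mul_assoc, coeff_sub, coeff_add, coeff_X_mul, coeff_C_mul, coeff_zero] at hcoeff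
  linear_combination -hcoeff

lemma periodic_coeff_zero_G (hZC : StationaryZeroCurvature α β F G H) :
    Function.Periodic (fun n => (G n).coeff 0) 1 := by
  intro n
  have hcoeff := congrArg (coeff · 0) (hZC.r4 (n + 1))
  simpa [mul_assoc, hZC.coeff_zero_H, sub_eq_zero] using hcoeff

lemma coeff_zero_G_eq (hZC : StationaryZeroCurvature α β F G H) (n n' : ℤ) :
    (G n).coeff 0 = (G n').coeff 0 := by
  have eq_at_zero (m : ℤ) : (G m).coeff 0 = (G 0).coeff 0 := by
    simpa using hZC.periodic_coeff_zero_G.int_mul_eq m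
  rw [eq_at_zero n, eq_at_zero n']

end StationaryZeroCurvature

/-- The relations (R1)–(R3) for the polynomials `F_p`, `G_{p+1}`, `H_{p+1}` with coefficient
sequences `f`, `g`, `h`, of which only the terms of index at most `p`, `p + 1`, `p + 1` matter. -/
abbrev CoeffZeroCurvature {R : Type*} [CommRing R] (α β : ℤ → R) (p : ℕ) (f g h : ℕ → ℤ → R) :
    Prop :=
  StationaryZeroCurvature α β (fun n => descendingPoly (f · n) p)
    (fun n => descendingPoly (g · n) (p + 1)) (fun n => descendingPoly (h · n) (p + 1))

namespace CoeffZeroCurvature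

variable {R : Type*} [CommRing R] {α β : ℤ → R} {p : ℕ} {f g h : ℕ → ℤ → R}

lemma f_zero (hg0 : ∀ n, g 0 n = 1) (hZC : CoeffZeroCurvature α β p f g h) (n : ℤ) :
    f 0 n = -2 * α (n + 1) := by
  have hcoeff := hZC.coeff_succ_F (n + 1) p
  simp only [coeff_descendingPoly_of_lt _ p.lt_succ_self, coeff_descendingPoly _ (add_zero p),
    coeff_descendingPoly _ (add_zero (p + 1)), hg0, add_sub_cancel_right] at hcoeff
  linear_combination -hcoeff

lemma h_zero (hg0 : ∀ n, g 0 n = 1) (hZC : CoeffZeroCurvature α β p f g h) (n : ℤ) :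
    h 0 n = 2 * β n := by
  have hcoeff := hZC.coeff_H n (p + 1)
  simp only [coeff_descendingPoly_of_lt _ (p + 1).lt_succ_self,
    coeff_descendingPoly _ (add_zero (p + 1)), hg0] at hcoeff
  linear_combination hcoeff

lemma g_succ_sub (hZC : CoeffZeroCurvature α β p f g h) {ℓ : ℕ} (hℓ : ℓ ≤ p) (n : ℤ) :
    g (ℓ + 1) n - g (ℓ + 1) (n - 1) = α n * h ℓ (n - 1) + β n * f ℓ n := by
  obtain ⟨k, hk⟩ := Nat.exists_eq_add_of_le' hℓ
  have hcoeff := hZC.coeff_G_sub n k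
  rwa [coeff_descendingPoly _ (show k + (ℓ + 1) = p + 1 by lia),
    coeff_descendingPoly _ (show k + (ℓ + 1) = p + 1 by lia),
    coeff_descendingPoly _ (show k + 1 + ℓ = p + 1 by lia),
    coeff_descendingPoly _ hk.symm] at hcoeff

lemma f_succ (hZC : CoeffZeroCurvature α β p f g h) {ℓ : ℕ} (hℓ : ℓ < p) (n : ℤ) :
    f (ℓ + 1) (n - 1) = f ℓ n - α n * (g (ℓ + 1) n + g (ℓ + 1) (n - 1)) := by
  obtain ⟨k, hk⟩ := Nat.exists_eq_add_of_lt hℓ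
  have hcoeff := hZC.coeff_succ_F n k
  simp only [coeff_descendingPoly _ (show k + 1 + ℓ = p by lia),
    coeff_descendingPoly _ (show k + (ℓ + 1) = p by lia),
    coeff_descendingPoly _ (show k + 1 + (ℓ + 1) = p + 1 by lia)] at hcoeff
  linear_combination -hcoeff

lemma h_succ (hZC : CoeffZeroCurvature α β p f g h) {ℓ : ℕ} (hℓ : ℓ ≤ p) (n : ℤ) :
    h (ℓ + 1) n = h ℓ (n - 1) + β n * (g (ℓ + 1) n + g (ℓ + 1) (n - 1)) := by
  obtain ⟨k, hk⟩ := Nat.exists_eq_add_of_le' hℓ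
  simpa only [coeff_descendingPoly _ (show k + (ℓ + 1) = p + 1 by lia),
    coeff_descendingPoly _ (show k + 1 + ℓ = p + 1 by lia)] using hZC.coeff_H n k

lemma f_last (hZC : CoeffZeroCurvature α β p f g h) (n : ℤ) :
    f p n = α n * (g (p + 1) n + g (p + 1) (n - 1)) := by
  simpa only [coeff_descendingPoly _ (zero_add p), coeff_descendingPoly _ (zero_add (p + 1))]
    using hZC.coeff_zero_F n

lemma h_last (hZC : CoeffZeroCurvature α β p f g h) (n : ℤ) : h (p + 1) n = 0 := by
  simpa only [coeff_descendingPoly _ (zero_add (p + 1))] using hZC.coeff_zero_H n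

lemma g_last_eq (hZC : CoeffZeroCurvature α β p f g h) (n n' : ℤ) :
    g (p + 1) n = g (p + 1) n' := by
  simpa only [coeff_descendingPoly _ (zero_add (p + 1))] using hZC.coeff_zero_G_eq n n'

end CoeffZeroCurvature

theorem zero_curvature_equals_recursion_general {R : Type*} [CommRing R]
    (α β : ℤ → R) (p : ℕ) (f g h : ℕ → ℤ → R) (hg0 : ∀ n : ℤ, g 0 n = 1)
    (hZC : CoeffZeroCurvature α β p f g h) :
    (∀ n : ℤ, f 0 n = -2 * α (n + 1)) ∧
    (∀ n : ℤ, h 0 n = 2 * β n) ∧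
    (∀ ℓ : ℕ, ℓ < p → ∀ n : ℤ,
      g (ℓ + 1) n - g (ℓ + 1) (n - 1) = α n * h ℓ (n - 1) + β n * f ℓ n) ∧
    (∀ ℓ : ℕ, ℓ < p → ∀ n : ℤ,
      f (ℓ + 1) (n - 1) = f ℓ n - α n * (g (ℓ + 1) n + g (ℓ + 1) (n - 1))) ∧
    (∀ ℓ : ℕ, ℓ < p → ∀ n : ℤ,
      h (ℓ + 1) n = h ℓ (n - 1) + β n * (g (ℓ + 1) n + g (ℓ + 1) (n - 1))) ∧
    (∀ n : ℤ, f p n = α n * (g (p + 1) n + g (p + 1) (n - 1))) ∧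
    (∀ n : ℤ, β n * (g (p + 1) n + g (p + 1) (n - 1)) + h p (n - 1) - h (p + 1) n = 0) ∧
    (∀ n : ℤ, h (p + 1) n = 0) ∧
    (∀ n : ℤ, g (p + 1) (n - 1) - g (p + 1) n + α n * h p (n - 1) + β n * f p n = 0) ∧
    (∀ n : ℤ, α n * h (p + 1) n + g (p + 1) (n - 1) - g (p + 1) n = 0) ∧
    (∀ n n' : ℤ, g (p + 1) n = g (p + 1) n') := by
  refine ⟨hZC.f_zero hg0, hZC.h_zero hg0, fun _ hℓ => hZC.g_succ_sub hℓ.le,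
    fun _ hℓ => hZC.f_succ hℓ, fun _ hℓ => hZC.h_succ hℓ.le, hZC.f_last, fun n => ?_, hZC.h_last,
    fun n => ?_, fun n => ?_, hZC.g_last_eq⟩
  · linear_combination -hZC.h_succ le_rfl n
  · linear_combination -hZC.g_succ_sub le_rfl n
  · linear_combination α n * hZC.h_last n + hZC.g_last_eq (n - 1) n

/-- If the polynomials `F_p(·,n) = Σ_{ℓ=0}^{p} f_{p−ℓ}(n) z^ℓ`,
`G_{p+1}(·,n) = Σ_{ℓ=0}^{p+1} g_{p+1−ℓ}(n) z^ℓ`, `H_{p+1}(·,n) = Σ_{ℓ=0}^{p+1} h_{p+1−ℓ}(n) z^ℓ`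
(with `g₀ ≡ 1`) satisfy the stationary zero-curvature relations (R1)–(R4) for all `n ∈ ℤ`,
then (a) `f₀(n) = −2α(n+1)`, `h₀(n) = 2β(n)`; (b) the SB recursion relations hold for
`ℓ = 0, …, p−1`; (c) the extra relations at the top level hold, and in particular
`g_{p+1}` is a lattice constant. -/
theorem zero_curvature_equals_recursion
    (α β : ℤ → ℂ) (p : ℕ) (hp : 1 ≤ p)
    (f g h : ℕ → ℤ → ℂ)
    (hg0 : ∀ n : ℤ, g 0 n = 1)
    (F G H : ℤ → Polynomial ℂ)
    (hF : ∀ n : ℤ, F n = ∑ ℓ ∈ Finset.range (p + 1), C (f (p - ℓ) n) * X ^ ℓ)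
    (hG : ∀ n : ℤ, G n = ∑ ℓ ∈ Finset.range (p + 2), C (g (p + 1 - ℓ) n) * X ^ ℓ)
    (hH : ∀ n : ℤ, H n = ∑ ℓ ∈ Finset.range (p + 2), C (h (p + 1 - ℓ) n) * X ^ ℓ)
    (hR1 : ∀ n : ℤ, F n - X * F (n - 1) - C (α n) * (G n + G (n - 1)) = 0)
    (hR2 : ∀ n : ℤ, X * C (β n) * (G n + G (n - 1)) + H (n - 1) - X * H n = 0)
    (hR3 : ∀ n : ℤ, X * (G (n - 1) - G n) + C (α n) * H (n - 1) + X * C (β n) * F n = 0)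
    (hR4 : ∀ n : ℤ, G n - G (n - 1) - C (α n) * H n - X * C (β n) * F (n - 1) = 0) :
    -- (a)
    (∀ n : ℤ, f 0 n = -2 * α (n + 1)) ∧
    (∀ n : ℤ, h 0 n = 2 * β n) ∧
    -- (b)
    (∀ ℓ : ℕ, ℓ < p → ∀ n : ℤ,
      g (ℓ + 1) n - g (ℓ + 1) (n - 1) = α n * h ℓ (n - 1) + β n * f ℓ n) ∧
    (∀ ℓ : ℕ, ℓ < p → ∀ n : ℤ,
      f (ℓ + 1) (n - 1) = f ℓ n - α n * (g (ℓ + 1) n + g (ℓ + 1) (n - 1))) ∧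
    (∀ ℓ : ℕ, ℓ < p → ∀ n : ℤ,
      h (ℓ + 1) n = h ℓ (n - 1) + β n * (g (ℓ + 1) n + g (ℓ + 1) (n - 1))) ∧
    -- (c)
    (∀ n : ℤ, f p n = α n * (g (p + 1) n + g (p + 1) (n - 1))) ∧
    (∀ n : ℤ, β n * (g (p + 1) n + g (p + 1) (n - 1)) + h p (n - 1) - h (p + 1) n = 0) ∧
    (∀ n : ℤ, h (p + 1) n = 0) ∧
    (∀ n : ℤ, g (p + 1) (n - 1) - g (p + 1) n + α n * h p (n - 1) + β n * f p n = 0) ∧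
    (∀ n : ℤ, α n * h (p + 1) n + g (p + 1) (n - 1) - g (p + 1) n = 0) ∧
    (∀ n n' : ℤ, g (p + 1) n = g (p + 1) n') := by
  obtain rfl : F = fun n => descendingPoly (f · n) p := funext hF
  obtain rfl : G = fun n => descendingPoly (g · n) (p + 1) := funext hG
  obtain rfl : H = fun n => descendingPoly (h · n) (p + 1) := funext hH
  exact zero_curvature_equals_recursion_general α β p f g h hg0 ⟨hR1, hR2, hR3⟩
end

section
/- Let z, y, a, b, F, F⁻, G, G⁻, H ∈ ℂ with F ≠ 0 and F⁻ ≠ 0, and suppose F − z·F⁻ − a·(G + G⁻) = 0, G − G⁻ − a·H − z·b·F⁻ = 0, and y² = G² − F·H. Define φ = (y + G)/F and φ⁻ = (y + G⁻)/F⁻. Then φ satisfies the Riccati-type equation a·φ·φ⁻ − φ⁻ + z·φ = z·b. -/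
/-! The curve relation says `(y + G)(G - y) = F H`, so `φ = (y + G)/F` satisfies the two linear
relations `F φ = y + G` and `(G - y) φ = H`: the vector `(1, φ)` is an eigenvector of
`[[G, -F], [H, -G]]` with eigenvalue `-y`. After multiplication by `F⁻`, the Riccati equation is
linear in `φ`; the first zero-curvature relation trades `z F⁻ + a G⁻` for `F - a G`, the two linear
relations eliminate `φ`, and the second zero-curvature relation is what remains. -/

theorem add_div_mul_sub_eq_of_sq_eq {K : Type*} [Field K] {y F G H : K} (hF : F ≠ 0)
    (hy : y ^ 2 = G ^ 2 - F * H) : (y + G) / F * (G - y) = H := by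
  rw [div_mul_eq_mul_div, div_eq_iff hF]
  linear_combination -hy

theorem mul_riccati_of_linear_relations {R : Type*} [CommRing R]
    {z y a b F Fm G Gm H φ φm : R}
    (h1 : F - z * Fm - a * (G + Gm) = 0) (h2 : G - Gm - a * H - z * b * Fm = 0)
    (hφF : φ * F = y + G) (hφH : φ * (G - y) = H) (hφm : φm * Fm = y + Gm) :
    (a * φ * φm - φm + z * φ) * Fm = z * b * Fm :=
  calc (a * φ * φm - φm + z * φ) * Fm
      = a * φ * (φm * Fm) - φm * Fm + φ * (z * Fm) := by ring
    _ = a * φ * (y + Gm) - (y + Gm) + φ * (F - a * (G + Gm)) := by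
      rw [hφm, show z * Fm = F - a * (G + Gm) by linear_combination -h1]
    _ = φ * F - (y + Gm) - a * (φ * (G - y)) := by ring
    _ = G - Gm - a * H := by rw [hφF, hφH]; ring
    _ = z * b * Fm := sub_eq_zero.mp h2

theorem riccati_from_zero_curvature_general {K : Type*} [Field K]
    (z y a b F Fm G Gm H : K) (hF : F ≠ 0) (hFm : Fm ≠ 0)
    (h1 : F - z * Fm - a * (G + Gm) = 0)
    (h2 : G - Gm - a * H - z * b * Fm = 0)
    (hy : y ^ 2 = G ^ 2 - F * H) :
    a * ((y + G) / F) * ((y + Gm) / Fm) - (y + Gm) / Fm + z * ((y + G) / F) = z * b :=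
  mul_right_cancel₀ hFm <|
    mul_riccati_of_linear_relations h1 h2 (div_mul_cancel₀ _ hF)
      (add_div_mul_sub_eq_of_sq_eq hF hy) (div_mul_cancel₀ _ hFm)

/-- Given the zero-curvature relations at one lattice site and the curve relation
`y² = G² − F·H`, the function `φ = (y + G)/F` (with `φ⁻ = (y + G⁻)/F⁻`) satisfies the
Riccati-type equation `a·φ·φ⁻ − φ⁻ + z·φ = z·b`. -/
theorem riccati_from_zero_curvature
    (z y a b F Fm G Gm H : ℂ) (hF : F ≠ 0) (hFm : Fm ≠ 0)
    (h1 : F - z * Fm - a * (G + Gm) = 0)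
    (h2 : G - Gm - a * H - z * b * Fm = 0)
    (hy : y ^ 2 = G ^ 2 - F * H) :
    a * ((y + G) / F) * ((y + Gm) / Fm) - (y + Gm) / Fm + z * ((y + G) / F) = z * b :=
  riccati_from_zero_curvature_general z y a b F Fm G Gm H hF hFm h1 h2 hy
end

section
/- Let z ∈ ℂ, let α, β : ℤ → ℂ, and let φ : ℤ → ℂ satisfy φ(n) ≠ 0 and the Riccati-type equation α(n)·φ(n)·φ(n−1) − φ(n−1) + z·φ(n) = z·β(n) for all n ∈ ℤ. Assume moreover z + α(m)·φ(m−1) ≠ 0 and z·β(m)·φ(m−1)^{−1} + 1 ≠ 0 for all m ∈ ℤ. Then the Baker–Akhiezer components satisfy ψ₂(n) = φ(n)·ψ₁(n) for all n ∈ ℤ. -/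
/-- First Baker–Akhiezer component: `ψ₁(n₀) = 1`,
`ψ₁(n) = ∏_{m=n₀+1}^{n} (z + α(m)·φ(m−1))` for `n ≥ n₀+1`, and
`ψ₁(n) = ∏_{m=n+1}^{n₀} (z + α(m)·φ(m−1))⁻¹` for `n ≤ n₀−1`. -/
noncomputable def psi1 (z : ℂ) (α φ : ℤ → ℂ) (n₀ n : ℤ) : ℂ :=
  if n₀ ≤ n then ∏ m ∈ Finset.Icc (n₀ + 1) n, (z + α m * φ (m - 1))
  else (∏ m ∈ Finset.Icc (n + 1) n₀, (z + α m * φ (m - 1)))⁻¹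

/-- Second Baker–Akhiezer component: `ψ₂(n₀) = φ(n₀)`,
`ψ₂(n) = φ(n₀)·∏_{m=n₀+1}^{n} (z·β(m)·φ(m−1)⁻¹ + 1)` for `n ≥ n₀+1`, and
`ψ₂(n) = φ(n₀)·∏_{m=n+1}^{n₀} (z·β(m)·φ(m−1)⁻¹ + 1)⁻¹` for `n ≤ n₀−1`. -/
noncomputable def psi2 (z : ℂ) (β φ : ℤ → ℂ) (n₀ n : ℤ) : ℂ :=
  φ n₀ *
    (if n₀ ≤ n then ∏ m ∈ Finset.Icc (n₀ + 1) n, (z * β m * (φ (m - 1))⁻¹ + 1)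
     else (∏ m ∈ Finset.Icc (n + 1) n₀, (z * β m * (φ (m - 1))⁻¹ + 1))⁻¹)

/-!
Multiplying the second transfer factor by `φ (m - 1)` clears its denominator, and the Riccati
equation says precisely that
`φ (m - 1) * (z * β m * (φ (m - 1))⁻¹ + 1) = φ m * (z + α m * φ (m - 1))`.
So `φ` intertwines the two families of transfer factors, and the products telescope.
-/

section Telescope

theorem mul_prod_Icc_eq_of_intertwine {M : Type*} [CommMonoid M] {f g u : ℤ → M}
    (h : ∀ m, u (m - 1) * f m = u m * g m) {a b : ℤ} (hab : a ≤ b) :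
    u a * ∏ m ∈ Finset.Icc (a + 1) b, f m = u b * ∏ m ∈ Finset.Icc (a + 1) b, g m := by
  induction b, hab using Int.leInduction with
  | base => simp
  | succ b hab ih =>
    have step : u b * f (b + 1) = u (b + 1) * g (b + 1) := by
      simpa only [add_sub_cancel_right] using h (b + 1)
    have top_notMem : b + 1 ∉ Finset.Icc (a + 1) b := by simp
    rw [← Finset.insert_Icc_right_eq_Icc_add_one (by lia), Finset.prod_insert top_notMem,
      Finset.prod_insert top_notMem]
    calc u a * (f (b + 1) * ∏ m ∈ Finset.Icc (a + 1) b, f m)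
      _ = f (b + 1) * (u b * ∏ m ∈ Finset.Icc (a + 1) b, g m) := by rw [mul_left_comm, ih]
      _ = u b * f (b + 1) * ∏ m ∈ Finset.Icc (a + 1) b, g m := by rw [mul_left_comm, mul_assoc]
      _ = u (b + 1) * (g (b + 1) * ∏ m ∈ Finset.Icc (a + 1) b, g m) := by rw [step, mul_assoc]

variable {G₀ : Type*} [CommGroupWithZero G₀]

/-- The product of `f` over `(n₀, n]` continued to `n < n₀` as the inverse of the product over
`(n, n₀]`. For nonvanishing `f` it is the solution of `P n = P (n - 1) * f n` with `P n₀ = 1`;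
both Baker–Akhiezer components are built from it. -/
noncomputable def twoSidedProd (f : ℤ → G₀) (n₀ n : ℤ) : G₀ :=
  if n₀ ≤ n then ∏ m ∈ Finset.Icc (n₀ + 1) n, f m
  else (∏ m ∈ Finset.Icc (n + 1) n₀, f m)⁻¹

theorem mul_twoSidedProd_eq_of_intertwine {f g u : ℤ → G₀} (hf : ∀ m, f m ≠ 0)
    (hg : ∀ m, g m ≠ 0) (h : ∀ m, u (m - 1) * f m = u m * g m) (n₀ n : ℤ) :
    u n₀ * twoSidedProd f n₀ n = u n * twoSidedProd g n₀ n := by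
  unfold twoSidedProd
  split_ifs with hn
  · exact mul_prod_Icc_eq_of_intertwine h hn
  · have telescoped := mul_prod_Icc_eq_of_intertwine h (not_le.mp hn).le
    rw [← div_eq_mul_inv, ← div_eq_mul_inv,
      div_eq_div_iff (Finset.prod_ne_zero_iff.mpr fun m _ => hf m)
        (Finset.prod_ne_zero_iff.mpr fun m _ => hg m)]
    exact telescoped.symm

end Telescope

section Riccati

variable {K : Type*} [Field K]

theorem riccati_iff_intertwine {z a b p q : K} (hp : p ≠ 0) :
    a * q * p - p + z * q = z * b ↔ p * (z * b * p⁻¹ + 1) = q * (z + a * p) := by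
  have clear_denom : p * (z * b * p⁻¹ + 1) = z * b + p := by field_simp
  rw [clear_denom]
  constructor <;> intro h <;> linear_combination -h

theorem baker_akhiezer_ratio_general {z : K} {α β φ : ℤ → K} (hφ : ∀ n, φ n ≠ 0)
    (hRic : ∀ n, α n * φ n * φ (n - 1) - φ (n - 1) + z * φ n = z * β n)
    (hfac : ∀ m, z + α m * φ (m - 1) ≠ 0) (n₀ n : ℤ) :
    φ n₀ * twoSidedProd (fun m => z * β m * (φ (m - 1))⁻¹ + 1) n₀ n =
      φ n * twoSidedProd (fun m => z + α m * φ (m - 1)) n₀ n := by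
  have intertwine (m : ℤ) :
      φ (m - 1) * (z * β m * (φ (m - 1))⁻¹ + 1) = φ m * (z + α m * φ (m - 1)) :=
    (riccati_iff_intertwine (hφ (m - 1))).mp (hRic m)
  have hfac' (m : ℤ) : z * β m * (φ (m - 1))⁻¹ + 1 ≠ 0 :=
    right_ne_zero_of_mul (intertwine m ▸ mul_ne_zero (hφ m) (hfac m))
  exact mul_twoSidedProd_eq_of_intertwine hfac' hfac intertwine n₀ n

end Riccati

/-- If `φ` is nowhere vanishing and satisfies the Riccati-type equation, and all
transfer factors are nonzero, then `ψ₂(n) = φ(n)·ψ₁(n)` for all `n ∈ ℤ`. -/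
theorem baker_akhiezer_ratio
    (z : ℂ) (α β : ℤ → ℂ) (φ : ℤ → ℂ) (n₀ : ℤ)
    (hφ : ∀ n : ℤ, φ n ≠ 0)
    (hRic : ∀ n : ℤ, α n * φ n * φ (n - 1) - φ (n - 1) + z * φ n = z * β n)
    (hfac1 : ∀ m : ℤ, z + α m * φ (m - 1) ≠ 0)
    (hfac2 : ∀ m : ℤ, z * β m * (φ (m - 1))⁻¹ + 1 ≠ 0) :
    ∀ n : ℤ, psi2 z β φ n₀ n = φ n * psi1 z α φ n₀ n :=
  baker_akhiezer_ratio_general hφ hRic hfac1 n₀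
end

section
/- Let z ∈ ℂ, let α, β : ℤ → ℂ, and let φ : ℤ → ℂ satisfy φ(n) ≠ 0 and the Riccati-type equation α(n)·φ(n)·φ(n−1) − φ(n−1) + z·φ(n) = z·β(n) for all n ∈ ℤ. Assume moreover z + α(m)·φ(m−1) ≠ 0 and z·β(m)·φ(m−1)^{−1} + 1 ≠ 0 for all m ∈ ℤ. Then the Baker–Akhiezer components satisfy, for all n ∈ ℤ, the transfer relations ψ₁(n) = z·ψ₁(n−1) + α(n)·ψ₂(n−1) and ψ₂(n) = z·β(n)·ψ₁(n−1) + ψ₂(n−1); equivalently, the vector Ψ(n) = (ψ₁(n), ψ₂(n))ᵀ satisfies Ψ(n) = U(z,n)·Ψ(n−1) with U(z,n) = [[z, α(n)], [z·β(n), 1]]. -/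
/-!
With `f n = z + α n * φ (n - 1)` and `g n = z * β n * (φ (n - 1))⁻¹ + 1`, the components solve
`ψ₁ n = f n * ψ₁ (n - 1)` and `ψ₂ n = g n * ψ₂ (n - 1)`. The Riccati equation says exactly that
`g n * φ (n - 1) = φ n * f n`, so `φ * ψ₁` solves the same recurrence as `ψ₂` and agrees with it at
`n₀`; hence `ψ₂ = φ * ψ₁`. The recurrence for `ψ₁` is then the first transfer relation, and
multiplying it by `φ n` and applying the Riccati equation once more gives the second.
-/

section Recurrence

variable {G : Type*}

/-- The two-sided product of `f` based at `n₀`: for nonvanishing `f`, the solution on `ℤ` of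
`w n = f n * w (n - 1)` with `w n₀ = 1`. To the left of `n₀` it is an inverse, hence the junk value
`0` past a zero of `f`. -/
noncomputable def bilateralProd [CommGroupWithZero G] (f : ℤ → G) (n₀ n : ℤ) : G :=
  if n₀ ≤ n then ∏ m ∈ Finset.Icc (n₀ + 1) n, f m else (∏ m ∈ Finset.Icc (n + 1) n₀, f m)⁻¹

theorem bilateralProd_self [CommGroupWithZero G] (f : ℤ → G) (n₀ : ℤ) :
    bilateralProd f n₀ n₀ = 1 := by
  simp [bilateralProd]

theorem bilateralProd_of_le [CommGroupWithZero G] (f : ℤ → G) {n₀ n : ℤ} (h : n ≤ n₀) :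
    bilateralProd f n₀ n = (∏ m ∈ Finset.Icc (n + 1) n₀, f m)⁻¹ := by
  obtain rfl | hlt := h.eq_or_lt
  · simp [bilateralProd]
  · exact if_neg hlt.not_ge

theorem bilateralProd_eq_mul_pred [CommGroupWithZero G] {f : ℤ → G} {n₀ n : ℤ}
    (hf : n ≤ n₀ → f n ≠ 0) :
    bilateralProd f n₀ n = f n * bilateralProd f n₀ (n - 1) := by
  obtain hlt | hle := lt_or_ge n₀ n
  · rw [bilateralProd, bilateralProd, if_pos hlt.le, if_pos (Int.le_sub_one_of_lt hlt),
      Finset.Icc_sub_one_right_eq_Ico, mul_comm, Finset.prod_Ico_mul_eq_prod_Icc hlt]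
  · rw [bilateralProd_of_le f hle, bilateralProd_of_le f (by lia), sub_add_cancel,
      ← Finset.mul_prod_Ioc_eq_prod_Icc hle, Finset.Icc_add_one_left_eq_Ioc, mul_inv,
      mul_inv_cancel_left₀ (hf hle)]

theorem eq_of_forall_eq_mul_pred [Mul G] [Zero G] [IsLeftCancelMulZero G] {g v w : ℤ → G} {n₀ : ℤ}
    (hg : ∀ m ≤ n₀, g m ≠ 0) (hv : ∀ n, v n = g n * v (n - 1)) (hw : ∀ n, w n = g n * w (n - 1))
    (h₀ : v n₀ = w n₀) : v = w := by
  funext n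
  induction n using Int.inductionOn' (b := n₀) with
  | zero => exact h₀
  | succ k _ ih => rw [hv, hw, add_sub_cancel_right, ih]
  | pred k hk ih => exact mul_left_cancel₀ (hg k hk) (by rw [← hv, ← hw, ih])

end Recurrence

section BakerAkhiezer

variable {K : Type*} [Field K] {z : K} {α β φ : ℤ → K} {n₀ : ℤ}

/-- The first Baker–Akhiezer component `ψ₁` over an arbitrary field; over `ℂ` it is `psi1`. -/
noncomputable def bakerAkhiezerFst (z : K) (α φ : ℤ → K) (n₀ n : ℤ) : K :=
  bilateralProd (fun m ↦ z + α m * φ (m - 1)) n₀ n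

/-- The second Baker–Akhiezer component `ψ₂` over an arbitrary field; over `ℂ` it is `psi2`. -/
noncomputable def bakerAkhiezerSnd (z : K) (β φ : ℤ → K) (n₀ n : ℤ) : K :=
  φ n₀ * bilateralProd (fun m ↦ z * β m * (φ (m - 1))⁻¹ + 1) n₀ n

theorem bakerAkhiezerFst_eq_mul_pred {n : ℤ} (hf : n ≤ n₀ → z + α n * φ (n - 1) ≠ 0) :
    bakerAkhiezerFst z α φ n₀ n =
      (z + α n * φ (n - 1)) * bakerAkhiezerFst z α φ n₀ (n - 1) :=
  bilateralProd_eq_mul_pred hf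

theorem bakerAkhiezerSnd_eq_mul_pred {n : ℤ} (hg : n ≤ n₀ → z * β n * (φ (n - 1))⁻¹ + 1 ≠ 0) :
    bakerAkhiezerSnd z β φ n₀ n =
      (z * β n * (φ (n - 1))⁻¹ + 1) * bakerAkhiezerSnd z β φ n₀ (n - 1) := by
  rw [bakerAkhiezerSnd, bilateralProd_eq_mul_pred hg, mul_left_comm, bakerAkhiezerSnd]

theorem riccati_factor_mul {n : ℤ} (hφ : φ (n - 1) ≠ 0)
    (hRic : α n * φ n * φ (n - 1) - φ (n - 1) + z * φ n = z * β n) :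
    (z * β n * (φ (n - 1))⁻¹ + 1) * φ (n - 1) = φ n * (z + α n * φ (n - 1)) := by
  rw [add_mul, inv_mul_cancel_right₀ hφ]
  linear_combination -hRic

theorem bakerAkhiezerSnd_eq_mul_fst (hφ : ∀ n, φ n ≠ 0)
    (hRic : ∀ n, α n * φ n * φ (n - 1) - φ (n - 1) + z * φ n = z * β n)
    (hf : ∀ m ≤ n₀, z + α m * φ (m - 1) ≠ 0) (n : ℤ) :
    bakerAkhiezerSnd z β φ n₀ n = φ n * bakerAkhiezerFst z α φ n₀ n := by
  have hfactor (m : ℤ) := riccati_factor_mul (hφ (m - 1)) (hRic m)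
  have hg (m : ℤ) (hm : m ≤ n₀) : z * β m * (φ (m - 1))⁻¹ + 1 ≠ 0 :=
    left_ne_zero_of_mul (hfactor m ▸ mul_ne_zero (hφ m) (hf m hm))
  refine congrFun (eq_of_forall_eq_mul_pred hg (fun m ↦ bakerAkhiezerSnd_eq_mul_pred (hg m))
    (w := fun m ↦ φ m * bakerAkhiezerFst z α φ n₀ m) (fun m ↦ ?_) ?_) n
  · rw [bakerAkhiezerFst_eq_mul_pred (hf m), ← mul_assoc, ← hfactor, mul_assoc]
  · simp only [bakerAkhiezerSnd, bakerAkhiezerFst, bilateralProd_self]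

theorem baker_akhiezer_transfer_general (hφ : ∀ n, φ n ≠ 0)
    (hRic : ∀ n, α n * φ n * φ (n - 1) - φ (n - 1) + z * φ n = z * β n)
    (hf : ∀ m ≤ n₀, z + α m * φ (m - 1) ≠ 0) (n : ℤ) :
    (bakerAkhiezerFst z α φ n₀ n =
        z * bakerAkhiezerFst z α φ n₀ (n - 1) + α n * bakerAkhiezerSnd z β φ n₀ (n - 1) ∧
      bakerAkhiezerSnd z β φ n₀ n =
        z * β n * bakerAkhiezerFst z α φ n₀ (n - 1) + bakerAkhiezerSnd z β φ n₀ (n - 1)) ∧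
    (!![z, α n; z * β n, 1] : Matrix (Fin 2) (Fin 2) K).mulVec
        ![bakerAkhiezerFst z α φ n₀ (n - 1), bakerAkhiezerSnd z β φ n₀ (n - 1)] =
      ![bakerAkhiezerFst z α φ n₀ n, bakerAkhiezerSnd z β φ n₀ n] := by
  have hsnd := bakerAkhiezerSnd_eq_mul_fst hφ hRic hf
  have hfst_rec := bakerAkhiezerFst_eq_mul_pred (hf n)
  have transfer_fst : bakerAkhiezerFst z α φ n₀ n =
      z * bakerAkhiezerFst z α φ n₀ (n - 1) + α n * bakerAkhiezerSnd z β φ n₀ (n - 1) := by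
    rw [hfst_rec, hsnd (n - 1)]
    ring
  have transfer_snd : bakerAkhiezerSnd z β φ n₀ n =
      z * β n * bakerAkhiezerFst z α φ n₀ (n - 1) + bakerAkhiezerSnd z β φ n₀ (n - 1) := by
    rw [hsnd n, hsnd (n - 1), hfst_rec]
    linear_combination bakerAkhiezerFst z α φ n₀ (n - 1) * hRic n
  refine ⟨⟨transfer_fst, transfer_snd⟩, ?_⟩
  rw [transfer_fst, transfer_snd]
  simp [Matrix.cons_mulVec, -Matrix.mulVec_cons]

end BakerAkhiezer

/-- If `φ` is nowhere vanishing and satisfies the Riccati-type equation, and all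
transfer factors are nonzero, then the Baker–Akhiezer components satisfy the transfer relations
`ψ₁(n) = z·ψ₁(n−1) + α(n)·ψ₂(n−1)` and `ψ₂(n) = z·β(n)·ψ₁(n−1) + ψ₂(n−1)`; equivalently,
`Ψ(n) = U(z,n)·Ψ(n−1)` with `U(z,n) = [[z, α(n)], [z·β(n), 1]]`. -/
theorem baker_akhiezer_transfer
    (z : ℂ) (α β : ℤ → ℂ) (φ : ℤ → ℂ) (n₀ : ℤ)
    (hφ : ∀ n : ℤ, φ n ≠ 0)
    (hRic : ∀ n : ℤ, α n * φ n * φ (n - 1) - φ (n - 1) + z * φ n = z * β n)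
    (hfac1 : ∀ m : ℤ, z + α m * φ (m - 1) ≠ 0)
    (hfac2 : ∀ m : ℤ, z * β m * (φ (m - 1))⁻¹ + 1 ≠ 0) :
    ∀ n : ℤ,
      (psi1 z α φ n₀ n = z * psi1 z α φ n₀ (n - 1) + α n * psi2 z β φ n₀ (n - 1) ∧
       psi2 z β φ n₀ n = z * β n * psi1 z α φ n₀ (n - 1) + psi2 z β φ n₀ (n - 1)) ∧
      (!![z, α n; z * β n, 1] : Matrix (Fin 2) (Fin 2) ℂ).mulVec
          ![psi1 z α φ n₀ (n - 1), psi2 z β φ n₀ (n - 1)]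
        = ![psi1 z α φ n₀ n, psi2 z β φ n₀ n] :=
  baker_akhiezer_transfer_general hφ hRic fun m _ ↦ hfac1 m
end
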